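/- Let E be a Fréchet space whose topology is generated by an increasing sequence of seminorms (‖·‖_k), let B = (b_n^k) and C = (c_n^k) be Köthe matrices, and let ℓ and ℓ̃ be Banach sequence spaces with monotone norm. Assume B satisfies the Grothendieck–Pietsch nuclearity condition: for every k there is m with Σ_n b_n^k / b_n^m < ∞. Then (E, λ^ℓ(B), λ^{ℓ̃}(C)) ∈ 𝓑𝓕 if and only if for every function N : ℕ → ℕ there exists N₀ ∈ ℕ such that for each r ∈ ℕ there exist k₀ ∈ ℕ and C₀ > 0 with c_j^r · ‖u‖*_{N₀} ≤ C₀ · (max_{1 ≤ k ≤ k₀} ‖u‖*_{N(k)} · b_i^k) · (max_{1 ≤ k ≤ k₀} c_j^k / b_i^{N(k)}) for all i ∈ ℕ, j ∈ ℕ and all u ∈ E′. -/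

import Mathlib

/-!
Only the coordinates matter: `S` is given by the functionals `uᵢ = (S ·)ᵢ`, `R` by the vectors
`R eᵢ`, and `R (S x) = ∑ᵢ uᵢ(x) R eᵢ`.

*Sufficiency* (`bounded_of_ineq`). Let `N k` be an index that works for the continuity of `R` into
the `k`-th seminorm and of `S` into the `g k`-th one, where `∑ᵢ bᵢᵏ / bᵢ^{g k} < ∞`. Then
`‖uᵢ‖*_{N k} bᵢᵏ` is dominated by a summable sequence in `i`. Applying the inequality to `uᵢ` and
multiplying by `|(R eᵢ)ⱼ|` bounds `|uᵢ(x) (R eᵢ)ⱼ| cⱼʳ`, as a sequence in `j`, by a finite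
combination of the sequences `|(R eᵢ)ⱼ| cⱼᵏ / bᵢ^{N k}`. By monotonicity of the norm of `ℓ̃`, the
`r`-th norm of `uᵢ(x) R eᵢ` is at most a summable sequence in `i` whenever `p N₀ x ≤ 1`. No
nuclearity of the range is needed.

*Necessity* (`ineq_of_bounded_of_monotone`). Enlarging `N` strengthens the inequality
(`ineq_mono`), so `N` may be taken monotone. If the inequality fails for every `N₀`, choose
failures `(iₛ, jₛ, uₛ)` with constants `≥ 8ˢ`, with `k₀ > s`, and with every large `N₀` occurring
at infinitely many stages `s`. As soon as `N₀ ≥ N 1` and `N₀ ≥ N (N 1)`, a failure with a large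
constant forces both `i` and `j` to be large (`Violation.lt_left`, `Violation.lt_right`), so
`iₛ` and `jₛ` can be taken strictly increasing. With `Aₛ`, `Dₛ` the two maxima on the right-hand
side, the operators
`S x = ∑ₛ 2⁻ˢ Aₛ⁻¹ uₛ(x) e_{iₛ}` and `R z = ∑ₛ 2⁻ˢ Dₛ⁻¹ z_{iₛ} e_{jₛ}` are continuous, because `ℓ¹`
embeds contractively into `ℓ` and `ℓ̃`. But the `jₛ`-th coordinate of `R (S x)` is
`4⁻ˢ (Aₛ Dₛ)⁻¹ uₛ(x)`, so each seminorm of a bounded `R ∘ S` would dominate `2ˢ` for infinitely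
many `s`.
-/

open scoped ENNReal BigOperators

/-- The `n`-th canonical unit sequence in `ℝ^ℕ`. -/
def eSeq (n : ℕ) : ℕ → ℝ := fun m => if m = n then 1 else 0

/-- Unconditional (finite-partial-sums) convergence of the series `∑ n, f n` to `y`,
with respect to the norm `nn`. -/
def HasSumIn (nn : (ℕ → ℝ) → ℝ) (f : ℕ → ℕ → ℝ) (y : ℕ → ℝ) : Prop :=
  ∀ ε : ℝ, 0 < ε → ∃ F : Finset ℕ, ∀ G : Finset ℕ, F ⊆ G → nn ((∑ n ∈ G, f n) - y) < ε

/-- A Banach sequence space with a monotone norm in which the canonical system `(eSeq n)`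
is an unconditional basis. -/
structure MonoBanachSeqSpace where
  mem : (ℕ → ℝ) → Prop
  nrm : (ℕ → ℝ) → ℝ
  mem_zero : mem 0
  mem_add : ∀ {x y}, mem x → mem y → mem (x + y)
  mem_smul : ∀ (c : ℝ) {x}, mem x → mem (c • x)
  nrm_nonneg : ∀ x, mem x → 0 ≤ nrm x
  nrm_eq_zero_iff : ∀ {x}, mem x → (nrm x = 0 ↔ x = 0)
  nrm_add_le : ∀ {x y}, mem x → mem y → nrm (x + y) ≤ nrm x + nrm y
  nrm_smul : ∀ (c : ℝ) {x}, mem x → nrm (c • x) = |c| * nrm x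
  complete : ∀ u : ℕ → ℕ → ℝ, (∀ n, mem (u n)) →
    (∀ ε : ℝ, 0 < ε → ∃ M, ∀ p q, M ≤ p → M ≤ q → nrm (u p - u q) < ε) →
    ∃ x, mem x ∧ ∀ ε : ℝ, 0 < ε → ∃ M, ∀ p, M ≤ p → nrm (u p - x) < ε
  mem_e : ∀ n, mem (eSeq n)
  nrm_e : ∀ n, nrm (eSeq n) = 1
  mem_mul : ∀ (β : ℕ → ℝ) {x}, mem x → (∀ n, |β n| ≤ 1) → mem fun n => β n * x n
  expand : ∀ {x : ℕ → ℝ} (β : ℕ → ℝ), mem x → (∀ n, |β n| ≤ 1) →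
    HasSumIn nrm (fun n => (β n * x n) • eSeq n) (fun n => β n * x n)
  mono : ∀ {x y}, mem x → mem y → (∀ n, |x n| ≤ |y n|) → nrm x ≤ nrm y

/-- A Köthe matrix over a countable index set. -/
def IsKotheMatrix {ι : Type*} (a : ι → ℕ → ℝ) : Prop :=
  ∀ n k, 0 < a n k ∧ a n k ≤ a n (k + 1)

/-- Membership in the Köthe space `λ(a)`. -/
def memLam {ι : Type*} (a : ι → ℕ → ℝ) (x : ι → ℝ) : Prop :=
  ∀ k, Summable fun n => |x n| * a n k

/-- The `k`-th seminorm of the Köthe space `λ(a)`. -/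
noncomputable def lamNorm {ι : Type*} (a : ι → ℕ → ℝ) (k : ℕ) (x : ι → ℝ) : ℝ :=
  ∑' n, |x n| * a n k

/-- Membership in the `ℓ`-Köthe space `λ^ℓ(b)`. -/
def memLamL (l : MonoBanachSeqSpace) (b : ℕ → ℕ → ℝ) (x : ℕ → ℝ) : Prop :=
  ∀ k, l.mem fun n => x n * b n k

/-- The `k`-th seminorm of the `ℓ`-Köthe space `λ^ℓ(b)`. -/
noncomputable def lamLNorm (l : MonoBanachSeqSpace) (b : ℕ → ℕ → ℝ) (k : ℕ) (x : ℕ → ℝ) : ℝ :=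
  l.nrm fun n => x n * b n k

/-- The operator seminorm `‖T‖_{pY,pX} = sup {pY (T x) : x ∈ memX, pX x ≤ 1}`,
with values in `ℝ≥0∞`. -/
noncomputable def opSeminorm {X Y : Type*} (memX : X → Prop) (pX : X → ℝ) (pY : Y → ℝ)
    (T : X → Y) : ℝ≥0∞ :=
  ⨆ x : {x : X // memX x ∧ pX x ≤ 1}, ENNReal.ofReal (pY (T x.1))

/-- The dual seminorm `‖u‖*_k = sup {|u x| : p k x ≤ 1}` of a linear functional,
with values in `ℝ≥0∞`. -/
noncomputable def dualNorm {E : Type*} [AddCommGroup E] [Module ℝ E]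
    (p : ℕ → Seminorm ℝ E) (k : ℕ) (u : E →ₗ[ℝ] ℝ) : ℝ≥0∞ :=
  ⨆ x : {x : E // p k x ≤ 1}, ENNReal.ofReal |u x.1|

/-- `max_{1 ≤ k ≤ k₀} f k` for a real-valued `f`. -/
noncomputable def maxIcc (k₀ : ℕ) (h : 1 ≤ k₀) (f : ℕ → ℝ) : ℝ :=
  (Finset.Icc 1 k₀).sup' (Finset.nonempty_Icc.mpr h) f

/-! ### Monotone Banach sequence spaces -/

namespace MonoBanachSeqSpace

variable (l : MonoBanachSeqSpace)

/-- Membership is solid. -/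
theorem mem_of_abs_le {x y : ℕ → ℝ} (hy : l.mem y) (h : ∀ n, |x n| ≤ |y n|) : l.mem x := by
  have h1 := l.mem_mul (fun n => x n / y n) hy (fun n => by
    rw [abs_div]
    exact div_le_one_of_le₀ (h n) (abs_nonneg _))
  convert h1 using 1
  funext n
  by_cases hn : y n = 0
  · have := h n
    rw [hn, abs_zero] at this
    simp [hn, abs_nonpos_iff.mp this]
  · field_simp

theorem abs_coord_le {x : ℕ → ℝ} (hx : l.mem x) (n : ℕ) : |x n| ≤ l.nrm x := by
  have h1 : l.nrm (x n • eSeq n) = |x n| := by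
    rw [l.nrm_smul _ (l.mem_e n), l.nrm_e, mul_one]
  rw [← h1]
  refine l.mono (l.mem_smul _ (l.mem_e n)) hx fun m => ?_
  by_cases hm : m = n
  · simp [eSeq, hm]
  · simp [eSeq, hm]

theorem mem_sum {ι : Type*} (G : Finset ι) (f : ι → ℕ → ℝ) (h : ∀ i ∈ G, l.mem (f i)) :
    l.mem (∑ i ∈ G, f i) := by
  classical
  induction G using Finset.induction_on with
  | empty => simpa using l.mem_zero
  | insert a s ha ih =>
    rw [Finset.sum_insert ha]
    exact l.mem_add (h a (by simp)) (ih fun i hi => h i (by simp [hi]))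

theorem nrm_zero : l.nrm 0 = 0 := (l.nrm_eq_zero_iff l.mem_zero).2 rfl

theorem nrm_sum_le {ι : Type*} (G : Finset ι) (f : ι → ℕ → ℝ) (h : ∀ i ∈ G, l.mem (f i)) :
    l.nrm (∑ i ∈ G, f i) ≤ ∑ i ∈ G, l.nrm (f i) := by
  classical
  induction G using Finset.induction_on with
  | empty => simp [l.nrm_zero]
  | insert a s ha ih =>
    rw [Finset.sum_insert ha, Finset.sum_insert ha]
    have h1 := l.nrm_add_le (h a (by simp)) (l.mem_sum s f fun i hi => h i (by simp [hi]))
    have h2 := ih fun i hi => h i (by simp [hi])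
    linarith

end MonoBanachSeqSpace

theorem sum_smul_eSeq_apply (G : Finset ℕ) (a : ℕ → ℝ) (t : ℕ) :
    (∑ n ∈ G, a n • eSeq n) t = if t ∈ G then a t else 0 := by
  simp [Finset.sum_apply, eSeq]

namespace MonoBanachSeqSpace

variable (l : MonoBanachSeqSpace)

theorem nrm_finsum_le (G : Finset ℕ) (a : ℕ → ℝ) :
    l.nrm (∑ n ∈ G, a n • eSeq n) ≤ ∑ n ∈ G, |a n| := by
  refine (l.nrm_sum_le G _ fun i _ => l.mem_smul _ (l.mem_e i)).trans ?_
  refine Finset.sum_le_sum fun i _ => ?_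
  rw [l.nrm_smul _ (l.mem_e i), l.nrm_e, mul_one]

/-- Since the unit sequences are normalised, `ℓ¹` embeds into `ℓ` with norm at most one. -/
theorem mem_nrm_of_summable {a : ℕ → ℝ} (ha : Summable fun n => |a n|) :
    l.mem a ∧ l.nrm a ≤ ∑' n, |a n| := by
  set u : ℕ → ℕ → ℝ := fun k => ∑ n ∈ Finset.range k, a n • eSeq n with hu
  have humem : ∀ k, l.mem (u k) := fun k =>
    l.mem_sum _ _ fun i _ => l.mem_smul _ (l.mem_e i)
  have hdiff : ∀ q p, q ≤ p → l.nrm (u p - u q) ≤ ∑ n ∈ Finset.Ico q p, |a n| := by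
    intro q p hqp
    have : u p - u q = ∑ n ∈ Finset.Ico q p, a n • eSeq n := by
      rw [hu]; exact (Finset.sum_Ico_eq_sub _ hqp).symm
    rw [this]
    exact l.nrm_finsum_le _ _
  have hneg : ∀ p q, l.nrm (u p - u q) = l.nrm (u q - u p) := by
    intro p q
    have h1 : l.mem (u q - u p) := by
      have := l.mem_add (humem q) (l.mem_smul (-1) (humem p))
      rwa [neg_one_smul, ← sub_eq_add_neg] at this
    have := l.nrm_smul (-1) h1
    rw [neg_one_smul, neg_sub] at this
    simpa using this
  have hcau : ∀ ε : ℝ, 0 < ε → ∃ M, ∀ p q, M ≤ p → M ≤ q → l.nrm (u p - u q) < ε := by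
    intro ε hε
    have hc := ha.hasSum.tendsto_sum_nat.cauchySeq
    obtain ⟨M, hM⟩ := Metric.cauchySeq_iff.1 hc ε hε
    have key : ∀ p q, M ≤ p → M ≤ q → q ≤ p → l.nrm (u p - u q) < ε := by
      intro p q hp hq hqp
      refine (hdiff q p hqp).trans_lt ?_
      have := hM p hp q hq
      rw [Real.dist_eq, ← Finset.sum_Ico_eq_sub _ hqp] at this
      exact (le_abs_self _).trans_lt this
    refine ⟨M, fun p q hp hq => ?_⟩
    rcases le_total q p with h | h
    · exact key p q hp hq h
    · rw [hneg]; exact key q p hq hp h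
  obtain ⟨x, hx, hlim⟩ := l.complete u humem hcau
  have hsubmem : ∀ p, l.mem (u p - x) := by
    intro p
    have := l.mem_add (humem p) (l.mem_smul (-1) hx)
    rwa [neg_one_smul, ← sub_eq_add_neg] at this
  -- coordinates are continuous, so the abstract limit is `a` itself
  have hxa : x = a := by
    funext n
    refine eq_of_abs_sub_le_all fun ε hε => ?_
    obtain ⟨M, hM⟩ := hlim ε hε
    have h1 := hM (max M (n + 1)) (le_max_left _ _)
    have h2 := (l.abs_coord_le (hsubmem (max M (n + 1))) n).trans_lt h1
    have h3 : u (max M (n + 1)) n = a n := by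
      rw [hu]; simp only
      rw [sum_smul_eSeq_apply, if_pos]
      simp
    rw [Pi.sub_apply, h3, abs_sub_comm] at h2
    exact h2.le
  refine ⟨hxa ▸ hx, ?_⟩
  rw [← hxa] at ha ⊢
  refine le_of_forall_pos_le_add fun ε hε => ?_
  obtain ⟨M, hM⟩ := hlim ε hε
  have h1 : l.nrm x ≤ l.nrm (u M) + l.nrm (u M - x) := by
    have h2 := l.nrm_add_le (humem M) (l.mem_smul (-1) (hsubmem M))
    rw [l.nrm_smul _ (hsubmem M)] at h2
    have h3 : u M + (-1 : ℝ) • (u M - x) = x := by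
      rw [neg_one_smul]; abel
    rw [h3] at h2
    simpa using h2
  have h4 : l.nrm (u M) ≤ ∑' n, |x n| := by
    refine (l.nrm_finsum_le _ _).trans ?_
    rw [hxa] at ha ⊢
    exact ha.sum_le_tsum _ fun _ _ => abs_nonneg _
  linarith [hM M le_rfl]

end MonoBanachSeqSpace

/-! ### Köthe matrices and operator seminorms -/

theorem IsKotheMatrix.pos {a : ℕ → ℕ → ℝ} (ha : IsKotheMatrix a) (n k : ℕ) : 0 < a n k :=
  (ha n k).1

theorem IsKotheMatrix.mono {a : ℕ → ℕ → ℝ} (ha : IsKotheMatrix a) (n : ℕ) : Monotone (a n) :=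
  monotone_nat_of_le_succ fun k => (ha n k).2

theorem opSeminorm_lt_top {X Y : Type*} {memX : X → Prop} {pX : X → ℝ} {pY : Y → ℝ}
    {T : X → Y} (M : ℝ) (h : ∀ x, memX x → pX x ≤ 1 → pY (T x) ≤ M) :
    opSeminorm memX pX pY T < ⊤ := by
  refine lt_of_le_of_lt (b := ENNReal.ofReal M) ?_ ENNReal.ofReal_lt_top
  exact iSup_le fun x => ENNReal.ofReal_le_ofReal (h x.1 x.2.1 x.2.2)

theorem exists_bound_of_opSeminorm {X Y : Type*} {memX : X → Prop} {pX : X → ℝ} {pY : Y → ℝ}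
    {T : X → Y} (h : opSeminorm memX pX pY T < ⊤) :
    ∃ M : ℝ, 0 ≤ M ∧ ∀ x, memX x → pX x ≤ 1 → pY (T x) ≤ M := by
  refine ⟨(opSeminorm memX pX pY T).toReal, ENNReal.toReal_nonneg, fun x hx hx1 => ?_⟩
  refine (ENNReal.ofReal_le_iff_le_toReal h.ne).1 ?_
  exact le_iSup (fun x : {x : X // memX x ∧ pX x ≤ 1} => ENNReal.ofReal (pY (T x.1))) ⟨x, hx, hx1⟩

section dual

variable {E : Type*} [AddCommGroup E] [Module ℝ E]

theorem le_dualNorm (p : ℕ → Seminorm ℝ E) (k : ℕ) (u : E →ₗ[ℝ] ℝ) {x : E} (hx : p k x ≤ 1) :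
    ENNReal.ofReal |u x| ≤ dualNorm p k u :=
  le_iSup (fun x : {x : E // p k x ≤ 1} => ENNReal.ofReal |u x.1|) ⟨x, hx⟩

theorem dualNorm_antitone (p : ℕ → Seminorm ℝ E) (hp : ∀ x, Monotone fun k => p k x)
    (u : E →ₗ[ℝ] ℝ) : Antitone fun k => dualNorm p k u := by
  intro k m hkm
  exact iSup_le fun x => le_dualNorm p k u ((hp x.1 hkm).trans x.2)

theorem abs_le_mul_seminorm (q : Seminorm ℝ E) (u : E →ₗ[ℝ] ℝ) {M : ℝ} (hM : 0 ≤ M)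
    (h : ∀ x, q x ≤ 1 → |u x| ≤ M) (x : E) : |u x| ≤ M * q x := by
  refine le_of_forall_pos_le_add fun ε hε => ?_
  have hq := apply_nonneg q x
  -- rescale by `q x + δ`, which is positive even where `q` vanishes
  set δ : ℝ := ε / (M + 1) with hδ
  have hδp : 0 < δ := by positivity
  have hs : 0 < q x + δ := by positivity
  have h1 := h ((q x + δ)⁻¹ • x) (by
    rw [map_smul_eq_mul, Real.norm_eq_abs, abs_of_pos (inv_pos.2 hs), inv_mul_le_iff₀ hs]
    linarith)
  rw [map_smul, smul_eq_mul, abs_mul, abs_of_pos (inv_pos.2 hs), inv_mul_le_iff₀ hs] at h1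
  have h2 : M * δ ≤ ε := by
    rw [hδ, mul_div_assoc', div_le_iff₀ (by positivity)]
    nlinarith
  nlinarith

end dual

theorem lamLNorm_smul (l : MonoBanachSeqSpace) (b : ℕ → ℕ → ℝ) (k : ℕ) (t : ℝ) {z : ℕ → ℝ}
    (hz : memLamL l b z) : lamLNorm l b k (t • z) = |t| * lamLNorm l b k z := by
  rw [lamLNorm, lamLNorm, ← l.nrm_smul t (hz k)]
  congr 1; funext n; simp [mul_assoc]

theorem lamLNorm_add_le (l : MonoBanachSeqSpace) (b : ℕ → ℕ → ℝ) (k : ℕ) {z w : ℕ → ℝ}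
    (hz : memLamL l b z) (hw : memLamL l b w) :
    lamLNorm l b k (z + w) ≤ lamLNorm l b k z + lamLNorm l b k w := by
  refine le_of_eq_of_le ?_ (l.nrm_add_le (hz k) (hw k))
  rw [lamLNorm]
  congr 1; funext n; simp [add_mul]

theorem memLamL_smul {l : MonoBanachSeqSpace} {b : ℕ → ℕ → ℝ} (t : ℝ) {z : ℕ → ℝ}
    (hz : memLamL l b z) : memLamL l b (t • z) := by
  intro k
  convert l.mem_smul t (hz k) using 1
  funext n; simp [mul_assoc]

theorem memLamL_add {l : MonoBanachSeqSpace} {b : ℕ → ℕ → ℝ} {z w : ℕ → ℝ}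
    (hz : memLamL l b z) (hw : memLamL l b w) : memLamL l b (z + w) := by
  intro k
  convert l.mem_add (hz k) (hw k) using 1
  funext n; simp [add_mul]

theorem memLamL_zero (l : MonoBanachSeqSpace) (b : ℕ → ℕ → ℝ) : memLamL l b 0 := by
  intro k
  convert l.mem_zero using 1
  funext n; simp

theorem memLamL_eSeq (l : MonoBanachSeqSpace) (b : ℕ → ℕ → ℝ) (i : ℕ) :
    memLamL l b (eSeq i) := by
  intro k
  convert l.mem_smul (b i k) (l.mem_e i) using 1
  funext n
  by_cases h : n = i <;> simp [eSeq, h]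

theorem lamLNorm_eSeq (l : MonoBanachSeqSpace) {b : ℕ → ℕ → ℝ} (hb : IsKotheMatrix b)
    (i k : ℕ) : lamLNorm l b k (eSeq i) = b i k := by
  have : (fun n => eSeq i n * b n k) = b i k • eSeq i := by
    funext n
    by_cases h : n = i <;> simp [eSeq, h]
  rw [lamLNorm, this, l.nrm_smul _ (l.mem_e i), l.nrm_e, mul_one, abs_of_pos (hb.pos i k)]

theorem memLamL_finsum {l : MonoBanachSeqSpace} {b : ℕ → ℕ → ℝ} (G : Finset ℕ) (z : ℕ → ℝ) :
    memLamL l b (∑ i ∈ G, z i • eSeq i) := by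
  induction G using Finset.induction_on with
  | empty => simpa using memLamL_zero l b
  | insert a s ha ih =>
    rw [Finset.sum_insert ha]
    exact memLamL_add (memLamL_smul _ (memLamL_eSeq l b a)) ih

theorem abs_coord_mul_le {l : MonoBanachSeqSpace} {b : ℕ → ℕ → ℝ} (hb : IsKotheMatrix b)
    {z : ℕ → ℝ} (hz : memLamL l b z) (i k : ℕ) : |z i| * b i k ≤ lamLNorm l b k z := by
  have := l.abs_coord_le (hz k) i
  rwa [abs_mul, abs_of_pos (hb.pos i k)] at this

/-- Finite sections of `z` approximate it in every seminorm of `λ^ℓ(b)`. -/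
theorem exists_section_close {l : MonoBanachSeqSpace} {b : ℕ → ℕ → ℝ}
    {z : ℕ → ℝ} (hz : memLamL l b z) (k : ℕ) :
    ∃ G : Finset ℕ, lamLNorm l b k (z - ∑ i ∈ G, z i • eSeq i) ≤ 1 := by
  obtain ⟨F, hF⟩ := l.expand (fun _ => 1) (hz k) (by simp) 1 one_pos
  refine ⟨F, ?_⟩
  have h1 := (hF F subset_rfl).le
  have hmem : memLamL l b (z - ∑ i ∈ F, z i • eSeq i) := by
    have := memLamL_add hz (memLamL_smul (-1) (memLamL_finsum (l := l) (b := b) F z))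
    rwa [neg_one_smul, ← sub_eq_add_neg] at this
  refine le_trans (le_of_eq ?_) h1
  have h2 := l.nrm_smul (-1) (hmem k)
  rw [abs_neg, abs_one, one_mul] at h2
  rw [lamLNorm, ← h2]
  congr 1
  funext n
  simp only [Pi.smul_apply, Pi.sub_apply, sum_smul_eSeq_apply, smul_eq_mul]
  split_ifs <;> ring

/-! ### Sufficiency of the inequalities -/

/-- Additivity and homogeneity on `λ^ℓ(b)` determine `R` on finite sections. -/
theorem map_section {l : MonoBanachSeqSpace} {b : ℕ → ℕ → ℝ} {R : (ℕ → ℝ) → (ℕ → ℝ)}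
    (hRadd : ∀ z w, memLamL l b z → memLamL l b w → R (z + w) = R z + R w)
    (hRsmul : ∀ (t : ℝ) (z), memLamL l b z → R (t • z) = t • R z)
    (G : Finset ℕ) (z : ℕ → ℝ) :
    R (∑ i ∈ G, z i • eSeq i) = ∑ i ∈ G, z i • R (eSeq i) := by
  induction G using Finset.induction_on with
  | empty =>
    have := hRsmul 0 0 (memLamL_zero l b)
    simpa using this
  | insert a s ha ih =>
    rw [Finset.sum_insert ha, Finset.sum_insert ha,
      hRadd _ _ (memLamL_smul _ (memLamL_eSeq l b a)) (memLamL_finsum s z), ih,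
      hRsmul _ _ (memLamL_eSeq l b a)]

/-- Sufficiency: `∑ᵢ uᵢ(x) R eᵢ` converges absolutely in every seminorm, uniformly on
`p N₀ x ≤ 1`. -/
theorem bounded_of_ineq
    {E : Type*} [AddCommGroup E] [Module ℝ E]
    (p : ℕ → Seminorm ℝ E)
    (hp : ∀ x, Monotone fun k => p k x)
    (b c : ℕ → ℕ → ℝ) (hb : IsKotheMatrix b) (hc : IsKotheMatrix c)
    (l lt : MonoBanachSeqSpace)
    (hGP : ∀ k, ∃ m, Summable fun n => b n k / b n m)
    (H : ∀ N : ℕ → ℕ, ∃ N₀ : ℕ, ∀ r : ℕ, ∃ k₀ : ℕ, 1 ≤ k₀ ∧ ∃ C₀ : ℝ, 0 < C₀ ∧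
        ∀ (i j : ℕ) (u : E →ₗ[ℝ] ℝ), (∃ k, ∃ C' : ℝ, ∀ x, |u x| ≤ C' * p k x) →
          ENNReal.ofReal (c j r) * dualNorm p N₀ u ≤
            ENNReal.ofReal C₀ *
              ((Finset.Icc 1 k₀).sup fun k => dualNorm p (N k) u * ENNReal.ofReal (b i k)) *
              ((Finset.Icc 1 k₀).sup fun k => ENNReal.ofReal (c j k / b i (N k))))
    (S : E →ₗ[ℝ] (ℕ → ℝ)) (R : (ℕ → ℝ) → (ℕ → ℝ))
    (hS : ∀ x, memLamL l b (S x))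
    (hR : ∀ z, memLamL l b z → memLamL lt c (R z))
    (hRadd : ∀ z w, memLamL l b z → memLamL l b w → R (z + w) = R z + R w)
    (hRsmul : ∀ (t : ℝ) (z), memLamL l b z → R (t • z) = t • R z)
    (hScont : ∀ k, ∃ m, opSeminorm (fun _ : E => True) (fun x => p m x) (lamLNorm l b k) S < ⊤)
    (hRcont : ∀ k, ∃ m, opSeminorm (memLamL l b) (lamLNorm l b m) (lamLNorm lt c k) R < ⊤) :
    ∃ N, ∀ r, opSeminorm (fun _ : E => True) (fun x => p N x) (lamLNorm lt c r)
          (fun x => R (S x)) < ⊤ := by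
  choose g hg using hGP
  choose mS hmS using hScont
  choose mR hmR using hRcont
  choose MS hMS0 hMS using fun k => exists_bound_of_opSeminorm (hmS k)
  choose MR hMR0 hMR using fun k => exists_bound_of_opSeminorm (hmR k)
  -- `S` is estimated in the norm with index `g k`, so that the coordinate functionals of `S`
  -- become summable against `b · k`
  set N : ℕ → ℕ := fun k => max (mS (g k)) (mR k) with hN
  obtain ⟨N₀, hN₀⟩ := H N
  refine ⟨N₀, fun r => ?_⟩
  obtain ⟨k₀, hk₀, C₀, hC₀, hineq⟩ := hN₀ r
  set σ : ℕ → ℝ := fun i => ∑ k ∈ Finset.Icc 1 k₀, MS (g k) * (b i k / b i (g k)) with hσ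
  have hσ0 : ∀ i, 0 ≤ σ i := fun i => Finset.sum_nonneg fun k _ =>
    mul_nonneg (hMS0 _) (div_nonneg (hb.pos _ _).le (hb.pos _ _).le)
  have hσs : Summable σ := summable_sum fun k _ => (hg k).mul_left _
  set K : ℝ := ∑ k ∈ Finset.Icc 1 k₀, MR k with hK
  have hK0 : 0 ≤ K := Finset.sum_nonneg fun k _ => hMR0 k
  set u : ℕ → E →ₗ[ℝ] ℝ := fun i => (LinearMap.proj i).comp S with hu
  have hux : ∀ i x, u i x = S x i := fun i x => rfl
  have hub : ∀ i k x, p (N k) x ≤ 1 → |u i x| * b i k ≤ MS (g k) * (b i k / b i (g k)) := by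
    intro i k x hx
    have h1 := hMS (g k) x trivial ((hp x (le_max_left (mS (g k)) (mR k))).trans hx)
    have h2 := (abs_coord_mul_le hb (hS x) i (g k)).trans h1
    rw [← le_div_iff₀ (hb.pos _ _)] at h2
    rw [hux]
    calc |S x i| * b i k ≤ MS (g k) / b i (g k) * b i k :=
          mul_le_mul_of_nonneg_right h2 (hb.pos _ _).le
      _ = _ := by ring
  have hucont : ∀ i, ∃ k, ∃ C' : ℝ, ∀ x, |u i x| ≤ C' * p k x := by
    intro i
    refine ⟨N 0, MS (g 0) * (b i 0 / b i (g 0)) / b i 0,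
      abs_le_mul_seminorm (p (N 0)) (u i) ?_ fun x hx => ?_⟩
    · have := hMS0 (g 0); have := hb.pos i 0; have := hb.pos i (g 0); positivity
    · rw [le_div_iff₀ (hb.pos _ _)]
      exact hub i 0 x hx
  have hRe : ∀ i k, lamLNorm lt c k (R (eSeq i)) ≤ MR k * b i (N k) := by
    intro i k
    have hpos := hb.pos i (mR k)
    have h1 := hMR k ((b i (mR k))⁻¹ • eSeq i) (memLamL_smul _ (memLamL_eSeq l b i)) (by
      rw [lamLNorm_smul _ _ _ _ (memLamL_eSeq l b i), lamLNorm_eSeq l hb,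
        abs_of_pos (inv_pos.2 hpos), inv_mul_cancel₀ hpos.ne'])
    rw [hRsmul _ _ (memLamL_eSeq l b i), lamLNorm_smul _ _ _ _ (hR _ (memLamL_eSeq l b i)),
      abs_of_pos (inv_pos.2 hpos), inv_mul_le_iff₀ hpos, mul_comm] at h1
    exact h1.trans (mul_le_mul_of_nonneg_left (hb.mono i (le_max_right _ _)) (hMR0 k))
  have hreal : ∀ i j x, p N₀ x ≤ 1 → c j r * |u i x| ≤
      C₀ * σ i * ∑ k ∈ Finset.Icc 1 k₀, c j k / b i (N k) := by
    intro i j x hx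
    have hsum0 : ∀ k ∈ Finset.Icc 1 k₀, 0 ≤ c j k / b i (N k) := fun k _ =>
      div_nonneg (hc.pos _ _).le (hb.pos _ _).le
    have hs1 : ((Finset.Icc 1 k₀).sup fun k => dualNorm p (N k) (u i) * ENNReal.ofReal (b i k))
        ≤ ENNReal.ofReal (σ i) := by
      refine Finset.sup_le fun k hk => ?_
      rw [dualNorm, ENNReal.iSup_mul]
      refine iSup_le fun y => ?_
      rw [← ENNReal.ofReal_mul (abs_nonneg _)]
      refine ENNReal.ofReal_le_ofReal ((hub i k y.1 y.2).trans ?_)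
      exact Finset.single_le_sum (f := fun k => MS (g k) * (b i k / b i (g k))) (fun k _ =>
        mul_nonneg (hMS0 _) (div_nonneg (hb.pos _ _).le (hb.pos _ _).le)) hk
    have hs2 : ((Finset.Icc 1 k₀).sup fun k => ENNReal.ofReal (c j k / b i (N k)))
        ≤ ENNReal.ofReal (∑ k ∈ Finset.Icc 1 k₀, c j k / b i (N k)) :=
      Finset.sup_le fun k hk => ENNReal.ofReal_le_ofReal (Finset.single_le_sum hsum0 hk)
    have h1 : ENNReal.ofReal (c j r) * ENNReal.ofReal |u i x| ≤
        ENNReal.ofReal C₀ * ENNReal.ofReal (σ i) *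
          ENNReal.ofReal (∑ k ∈ Finset.Icc 1 k₀, c j k / b i (N k)) :=
      calc _ ≤ ENNReal.ofReal (c j r) * dualNorm p N₀ (u i) := by
            gcongr; exact le_dualNorm p N₀ (u i) hx
        _ ≤ _ := hineq i j (u i) (hucont i)
        _ ≤ _ := by gcongr
    rw [← ENNReal.ofReal_mul (hc.pos _ _).le, ← ENNReal.ofReal_mul hC₀.le,
      ← ENNReal.ofReal_mul (mul_nonneg hC₀.le (hσ0 i))] at h1
    exact (ENNReal.ofReal_le_ofReal_iff
      (mul_nonneg (mul_nonneg hC₀.le (hσ0 i)) (Finset.sum_nonneg hsum0))).1 h1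
  have hterm : ∀ i x, p N₀ x ≤ 1 → lamLNorm lt c r (S x i • R (eSeq i)) ≤ C₀ * σ i * K := by
    intro i x hx
    have hRm := hR _ (memLamL_eSeq l b i)
    set y : ℕ → ℕ → ℝ := fun k j => |R (eSeq i) j * c j k| with hy
    have hymem : ∀ k, lt.mem (y k) := fun k => lt.mem_of_abs_le (hRm k) fun j => by simp [hy]
    have hynrm : ∀ k, lt.nrm (y k) ≤ MR k * b i (N k) := fun k =>
      (lt.mono (hymem k) (hRm k) fun j => by simp [hy]).trans (hRe i k)
    set f : ℕ → ℕ → ℝ := fun k => (C₀ * σ i / b i (N k)) • y k with hf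
    have hfmem : ∀ k ∈ Finset.Icc 1 k₀, lt.mem (f k) := fun k _ => lt.mem_smul _ (hymem k)
    have h1 : lamLNorm lt c r (S x i • R (eSeq i)) ≤ lt.nrm (∑ k ∈ Finset.Icc 1 k₀, f k) := by
      refine lt.mono (memLamL_smul _ hRm r) (lt.mem_sum _ _ hfmem) fun j => ?_
      refine le_trans ?_ (le_abs_self _)
      have h2 := mul_le_mul_of_nonneg_left (hreal i j x hx) (abs_nonneg (R (eSeq i) j))
      have h3 : |(S x i • R (eSeq i)) j * c j r| = |R (eSeq i) j| * (c j r * |u i x|) := by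
        rw [hux, Pi.smul_apply, smul_eq_mul, abs_mul, abs_mul, abs_of_pos (hc.pos j r)]; ring
      rw [h3]
      refine h2.trans (le_of_eq ?_)
      rw [Finset.sum_apply, Finset.mul_sum, Finset.mul_sum]
      refine Finset.sum_congr rfl fun k _ => ?_
      simp only [hf, hy, Pi.smul_apply, smul_eq_mul, abs_mul, abs_of_pos (hc.pos j k)]
      ring
    refine h1.trans ((lt.nrm_sum_le _ _ hfmem).trans ?_)
    rw [hK, Finset.mul_sum]
    refine Finset.sum_le_sum fun k _ => ?_
    have hq : 0 ≤ C₀ * σ i / b i (N k) :=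
      div_nonneg (mul_nonneg hC₀.le (hσ0 i)) (hb.pos _ _).le
    rw [hf, lt.nrm_smul _ (hymem k), abs_of_nonneg hq]
    refine (mul_le_mul_of_nonneg_left (hynrm k) hq).trans (le_of_eq ?_)
    have := (hb.pos i (N k)).ne'
    field_simp
  refine opSeminorm_lt_top (C₀ * K * (∑' i, σ i) + MR r) fun x _ hx => ?_
  obtain ⟨G, hG⟩ := exists_section_close (hS x) (mR r)
  set z := ∑ i ∈ G, S x i • eSeq i with hz
  have hzmem : memLamL l b z := memLamL_finsum G (S x)
  have hwmem : memLamL l b (S x - z) := by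
    have := memLamL_add (hS x) (memLamL_smul (-1) hzmem)
    rwa [neg_one_smul, ← sub_eq_add_neg] at this
  have hsplit : R (S x) = R z + R (S x - z) := by
    rw [← hRadd _ _ hzmem hwmem, add_sub_cancel]
  have hzb : lamLNorm lt c r (R z) ≤ C₀ * K * ∑' i, σ i := by
    rw [hz, map_section hRadd hRsmul]
    have h1 : lamLNorm lt c r (∑ i ∈ G, S x i • R (eSeq i)) ≤
        ∑ i ∈ G, lamLNorm lt c r (S x i • R (eSeq i)) := by
      refine le_of_eq_of_le ?_ (lt.nrm_sum_le G (fun i n => (S x i • R (eSeq i)) n * c n r)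
        fun i _ => memLamL_smul _ (hR _ (memLamL_eSeq l b i)) r)
      rw [lamLNorm]
      congr 1
      funext n
      rw [Finset.sum_apply, Finset.sum_apply, Finset.sum_mul]
    calc _ ≤ ∑ i ∈ G, lamLNorm lt c r (S x i • R (eSeq i)) := h1
      _ ≤ ∑ i ∈ G, C₀ * K * σ i := Finset.sum_le_sum fun i _ =>
          (hterm i x hx).trans (le_of_eq (by ring))
      _ = C₀ * K * ∑ i ∈ G, σ i := (Finset.mul_sum _ _ _).symm
      _ ≤ _ := mul_le_mul_of_nonneg_left (hσs.sum_le_tsum G fun i _ => hσ0 i)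
          (mul_nonneg hC₀.le hK0)
  change lamLNorm lt c r (R (S x)) ≤ _
  rw [hsplit]
  exact (lamLNorm_add_le lt c r (hR _ hzmem) (hR _ hwmem)).trans
    (add_le_add hzb (hMR r _ hwmem hG))

/-! ### Necessity of the inequalities -/

/-- The content of a failure of the inequality with data `N, N₀, r, k₀, C` at `i, j, u`, in real
terms: `A` and `D` are the two maxima on its right-hand side, and `x` witnesses that
`c j r * ‖u‖*_{N₀} > C * A * D`. -/
structure Violation {E : Type*} [AddCommGroup E] [Module ℝ E] (p : ℕ → Seminorm ℝ E)
    (b c : ℕ → ℕ → ℝ) (N : ℕ → ℕ) (N₀ r k₀ : ℕ) (C : ℝ) (i j : ℕ) (u : E →ₗ[ℝ] ℝ)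
    (A D : ℝ) : Prop where
  A_pos : 0 < A
  D_pos : 0 < D
  u_le : ∀ k, 1 ≤ k → k ≤ k₀ → ∀ x, |u x| * b i k ≤ A * p (N k) x
  c_le : ∀ k, 1 ≤ k → k ≤ k₀ → c j k / b i (N k) ≤ D
  big : ∃ x, p N₀ x ≤ 1 ∧ C * A * D < c j r * |u x|

theorem exists_violation {E : Type*} [AddCommGroup E] [Module ℝ E] {p : ℕ → Seminorm ℝ E}
    {b c : ℕ → ℕ → ℝ} (hb : IsKotheMatrix b) (hc : IsKotheMatrix c) {N : ℕ → ℕ}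
    {N₀ r k₀ : ℕ} (hk₀ : 1 ≤ k₀) {C : ℝ} (hC : 0 < C) {i j : ℕ} {u : E →ₗ[ℝ] ℝ}
    (h : ENNReal.ofReal C *
          ((Finset.Icc 1 k₀).sup fun k => dualNorm p (N k) u * ENNReal.ofReal (b i k)) *
          ((Finset.Icc 1 k₀).sup fun k => ENNReal.ofReal (c j k / b i (N k))) <
        ENNReal.ofReal (c j r) * dualNorm p N₀ u) :
    ∃ A D, Violation p b c N N₀ r k₀ C i j u A D := by
  set A := (Finset.Icc 1 k₀).sup fun k => dualNorm p (N k) u * ENNReal.ofReal (b i k) with hA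
  set D := (Finset.Icc 1 k₀).sup fun k => ENNReal.ofReal (c j k / b i (N k)) with hD
  have hAk : ∀ k, 1 ≤ k → k ≤ k₀ → dualNorm p (N k) u * ENNReal.ofReal (b i k) ≤ A :=
    fun k h1 h2 => Finset.le_sup (f := fun k => dualNorm p (N k) u * ENNReal.ofReal (b i k))
      (Finset.mem_Icc.2 ⟨h1, h2⟩)
  have hDk : ∀ k, 1 ≤ k → k ≤ k₀ → ENNReal.ofReal (c j k / b i (N k)) ≤ D :=
    fun k h1 h2 => Finset.le_sup (f := fun k => ENNReal.ofReal (c j k / b i (N k)))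
      (Finset.mem_Icc.2 ⟨h1, h2⟩)
  have hDtop : D ≠ ⊤ := by
    refine ((Finset.sup_lt_iff (by simp)).2 fun k _ => ?_).ne
    exact ENNReal.ofReal_lt_top
  have hDpos : D ≠ 0 := by
    refine (lt_of_lt_of_le ?_ (hDk 1 le_rfl hk₀)).ne'
    exact ENNReal.ofReal_pos.2 (div_pos (hc.pos _ _) (hb.pos _ _))
  have hCp : ENNReal.ofReal C ≠ 0 := (ENNReal.ofReal_pos.2 hC).ne'
  have hAtop : A ≠ ⊤ := by
    intro hA'
    rw [hA', ENNReal.mul_top hCp, ENNReal.top_mul hDpos] at h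
    exact not_top_lt h
  have hxbound : ∀ k, 1 ≤ k → k ≤ k₀ → ∀ x, |u x| * b i k ≤ A.toReal * p (N k) x := by
    intro k h1 h2 x
    have hbk := hb.pos i k
    have h3 : ∀ y, p (N k) y ≤ 1 → |u y| ≤ A.toReal / b i k := by
      intro y hy
      rw [le_div_iff₀ hbk, ← ENNReal.ofReal_le_iff_le_toReal hAtop,
        ENNReal.ofReal_mul (abs_nonneg _)]
      exact le_trans (by gcongr; exact le_dualNorm p (N k) u hy) (hAk k h1 h2)
    have h4 := abs_le_mul_seminorm (p (N k)) u (div_nonneg ENNReal.toReal_nonneg hbk.le) h3 x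
    calc |u x| * b i k ≤ A.toReal / b i k * p (N k) x * b i k :=
          mul_le_mul_of_nonneg_right h4 hbk.le
      _ = _ := by field_simp
  have hbig : ∃ x, p N₀ x ≤ 1 ∧ C * A.toReal * D.toReal < c j r * |u x| := by
    rw [dualNorm, ENNReal.mul_iSup, lt_iSup_iff] at h
    obtain ⟨x, hx⟩ := h
    refine ⟨x.1, x.2, ?_⟩
    rw [← ENNReal.ofReal_toReal hAtop, ← ENNReal.ofReal_toReal hDtop,
      ← ENNReal.ofReal_mul hC.le,
      ← ENNReal.ofReal_mul (mul_nonneg hC.le ENNReal.toReal_nonneg),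
      ← ENNReal.ofReal_mul (hc.pos _ _).le] at hx
    exact (ENNReal.ofReal_lt_ofReal_iff_of_nonneg (mul_nonneg
      (mul_nonneg hC.le ENNReal.toReal_nonneg) ENNReal.toReal_nonneg)).1 hx
  have hDp : 0 < D.toReal := ENNReal.toReal_pos hDpos hDtop
  refine ⟨A.toReal, D.toReal, ?_, hDp, hxbound, fun k h1 h2 =>
    (ENNReal.ofReal_le_iff_le_toReal hDtop).1 (hDk k h1 h2), hbig⟩
  refine lt_of_le_of_ne ENNReal.toReal_nonneg fun hA0 => ?_
  obtain ⟨x, -, hx⟩ := hbig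
  have h1 := hxbound 1 le_rfl hk₀ x
  rw [← hA0, zero_mul] at h1
  have h2 : |u x| ≤ 0 := nonpos_of_mul_nonpos_left h1 (hb.pos i 1)
  rw [← hA0, abs_nonpos_iff.1 h2] at hx
  simp at hx

/-- For `N₀ ≥ N 1`, the constant of a violation is bounded in terms of `i` and `r` alone; hence
large constants exclude any given finite set of indices `i`. -/
theorem Violation.lt_left {E : Type*} [AddCommGroup E] [Module ℝ E] {p : ℕ → Seminorm ℝ E}
    (hp : ∀ x, Monotone fun k => p k x)
    {b c : ℕ → ℕ → ℝ} (hb : IsKotheMatrix b) (hc : IsKotheMatrix c) {N : ℕ → ℕ}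
    {N₀ r k₀ i j : ℕ} {C A D : ℝ} {u : E →ₗ[ℝ] ℝ}
    (h : Violation p b c N N₀ r k₀ C i j u A D) (hN₀ : N 1 ≤ N₀) (hk₀ : r + 1 ≤ k₀) :
    C < b i (N (r + 1)) / b i 1 := by
  obtain ⟨x, hx, hbig⟩ := h.big
  have hA := h.A_pos
  have hD := h.D_pos
  have h1 : |u x| * b i 1 ≤ A :=
    (h.u_le 1 le_rfl (by omega) x).trans
      (mul_le_of_le_one_right hA.le ((hp x hN₀).trans hx))
  have h2 : c j r ≤ D * b i (N (r + 1)) :=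
    (hc.mono j (Nat.le_succ r)).trans
      ((div_le_iff₀ (hb.pos _ _)).1 (h.c_le (r + 1) (by omega) hk₀))
  have hb1 := hb.pos i 1
  have hbN := hb.pos i (N (r + 1))
  rw [lt_div_iff₀ hb1]
  have h3 : C * A * D * b i 1 < D * b i (N (r + 1)) * A := by
    calc C * A * D * b i 1 < c j r * |u x| * b i 1 := mul_lt_mul_of_pos_right hbig hb1
      _ = c j r * (|u x| * b i 1) := by ring
      _ ≤ D * b i (N (r + 1)) * A := mul_le_mul h2 h1 (by positivity) (by positivity)
  refine lt_of_mul_lt_mul_right (a := A * D) ?_ (by positivity)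
  linarith

/-- For `N₀ ≥ N (N 1)`, the constant of a violation is bounded in terms of `j` and `r` alone; hence
large constants exclude any given finite set of indices `j`. -/
theorem Violation.lt_right {E : Type*} [AddCommGroup E] [Module ℝ E] {p : ℕ → Seminorm ℝ E}
    (hp : ∀ x, Monotone fun k => p k x)
    {b c : ℕ → ℕ → ℝ} (hb : IsKotheMatrix b) (hc : IsKotheMatrix c) {N : ℕ → ℕ}
    {N₀ r k₀ i j : ℕ} {C A D : ℝ} {u : E →ₗ[ℝ] ℝ}
    (h : Violation p b c N N₀ r k₀ C i j u A D) (hN1 : 1 ≤ N 1) (hN₀ : N (N 1) ≤ N₀)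
    (hk₀ : N 1 ≤ k₀) :
    C < c j r / c j 1 := by
  obtain ⟨x, hx, hbig⟩ := h.big
  have hA := h.A_pos
  have hD := h.D_pos
  have h1 : |u x| * b i (N 1) ≤ A :=
    (h.u_le (N 1) hN1 hk₀ x).trans
      (mul_le_of_le_one_right hA.le ((hp x hN₀).trans hx))
  have h2 : c j 1 ≤ D * b i (N 1) :=
    (div_le_iff₀ (hb.pos _ _)).1 (h.c_le 1 le_rfl (by omega))
  have hc1 := hc.pos j 1
  have hcr := hc.pos j r
  have hbN := hb.pos i (N 1)
  rw [lt_div_iff₀ hc1]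
  have h3 : C * A * D * c j 1 < c j r * D * A := by
    calc C * A * D * c j 1 < c j r * |u x| * c j 1 := mul_lt_mul_of_pos_right hbig hc1
      _ ≤ c j r * |u x| * (D * b i (N 1)) := mul_le_mul_of_nonneg_left h2 (by positivity)
      _ = c j r * D * (|u x| * b i (N 1)) := by ring
      _ ≤ c j r * D * A := mul_le_mul_of_nonneg_left h1 (by positivity)
  refine lt_of_mul_lt_mul_right (a := A * D) ?_ (by positivity)
  linarith

/-- If `|f s * a (i s)|` is dominated by a summable `M s`, then placing `f s` at the position
`i s` yields an element of the space with weight `a`, of norm at most `∑' s, M s`. -/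
theorem extend_mem_nrm (l : MonoBanachSeqSpace) {i : ℕ → ℕ} (hi : Function.Injective i)
    (f : ℕ → ℝ) (a : ℕ → ℝ) {M : ℕ → ℝ} (hM : Summable M)
    (hfM : ∀ s, |f s * a (i s)| ≤ M s) :
    l.mem (fun n => Function.extend i f 0 n * a n) ∧
      l.nrm (fun n => Function.extend i f 0 n * a n) ≤ ∑' s, M s := by
  have hzero : ∀ n ∉ Set.range i, |Function.extend i f 0 n * a n| = 0 := by
    intro n hn
    rw [Function.extend_apply' _ _ _ (by simpa using hn)]
    simp
  have hcomp : (fun n => |Function.extend i f 0 n * a n|) ∘ i = fun s => |f s * a (i s)| := by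
    funext s
    simp [hi.extend_apply]
  have hsum : Summable fun s => |f s * a (i s)| :=
    Summable.of_nonneg_of_le (fun _ => abs_nonneg _) hfM hM
  have hs : Summable fun n => |Function.extend i f 0 n * a n| := by
    rw [← hi.summable_iff hzero, hcomp]
    exact hsum
  obtain ⟨h1, h2⟩ := l.mem_nrm_of_summable hs
  refine ⟨h1, h2.trans ?_⟩
  have h3 : ∑' n, |Function.extend i f 0 n * a n| = ∑' s, |f s * a (i s)| := by
    rw [← hcomp]
    refine (hi.tsum_eq ?_).symm
    intro n hn
    by_contra hn'
    exact hn (hzero n hn')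
  rw [h3]
  exact hsum.tsum_le_tsum hfM hM

theorem summable_geom_add_finite (K : ℕ) (w : ℕ → ℝ) :
    Summable fun s : ℕ => (1 / 2 : ℝ) ^ s + if s < K then w s else 0 := by
  refine summable_geometric_two.add ?_
  refine summable_of_ne_finset_zero (s := Finset.range K) fun s hs => ?_
  rw [if_neg (by simpa using hs)]

/-- Gliding-hump construction: a failure of the inequality for every `N₀` produces an unbounded
factorized operator. -/
theorem ineq_of_bounded_of_monotone
    {E : Type*} [AddCommGroup E] [Module ℝ E]
    (p : ℕ → Seminorm ℝ E)
    (hp : ∀ x, Monotone fun k => p k x)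
    (b c : ℕ → ℕ → ℝ) (hb : IsKotheMatrix b) (hc : IsKotheMatrix c)
    (l lt : MonoBanachSeqSpace)
    (hBF : ∀ (S : E →ₗ[ℝ] (ℕ → ℝ)) (R : (ℕ → ℝ) → (ℕ → ℝ)),
        (∀ x, memLamL l b (S x)) →
        (∀ z, memLamL l b z → memLamL lt c (R z)) →
        (∀ z w, memLamL l b z → memLamL l b w → R (z + w) = R z + R w) →
        (∀ (t : ℝ) (z), memLamL l b z → R (t • z) = t • R z) →
        (∀ k, ∃ m, opSeminorm (fun _ : E => True) (fun x => p m x) (lamLNorm l b k) S < ⊤) →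
        (∀ k, ∃ m, opSeminorm (memLamL l b) (lamLNorm l b m) (lamLNorm lt c k) R < ⊤) →
        ∃ N, ∀ r, opSeminorm (fun _ : E => True) (fun x => p N x) (lamLNorm lt c r)
          (fun x => R (S x)) < ⊤)
    (N : ℕ → ℕ) (hN : Monotone N) (hN1 : 1 ≤ N 1) :
    ∃ N₀ : ℕ, ∀ r : ℕ, ∃ k₀ : ℕ, 1 ≤ k₀ ∧ ∃ C₀ : ℝ, 0 < C₀ ∧
        ∀ (i j : ℕ) (u : E →ₗ[ℝ] ℝ), (∃ k, ∃ C' : ℝ, ∀ x, |u x| ≤ C' * p k x) →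
          ENNReal.ofReal (c j r) * dualNorm p N₀ u ≤
            ENNReal.ofReal C₀ *
              ((Finset.Icc 1 k₀).sup fun k => dualNorm p (N k) u * ENNReal.ofReal (b i k)) *
              ((Finset.Icc 1 k₀).sup fun k => ENNReal.ofReal (c j k / b i (N k))) := by
  by_contra hcon
  push Not at hcon
  choose r hr using hcon
  -- `N₀ s` takes every value `≥ L` infinitely often
  set L : ℕ := N 1 + N (N 1) with hL
  set N₀ : ℕ → ℕ := fun s => L + (Nat.unpair s).1 with hN₀
  set κ : ℕ → ℕ := fun s => s + 1 + r (N₀ s) + N 1 with hκ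
  have key : ∀ s Q : ℕ, ∃ q : ℕ × ℕ, Q ≤ q.1 ∧ Q ≤ q.2 ∧ ∃ (u : E →ₗ[ℝ] ℝ) (A D : ℝ),
      Violation p b c N (N₀ s) (r (N₀ s)) (κ s) (8 ^ s) q.1 q.2 u A D := by
    intro s Q
    have hX0 : ∀ i ∈ Finset.range Q, 0 ≤ b i (N (r (N₀ s) + 1)) / b i 1 := fun i _ =>
      div_nonneg (hb.pos _ _).le (hb.pos _ _).le
    have hY0 : ∀ j ∈ Finset.range Q, 0 ≤ c j (r (N₀ s)) / c j 1 := fun i _ =>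
      div_nonneg (hc.pos _ _).le (hc.pos _ _).le
    set X := ∑ i ∈ Finset.range Q, b i (N (r (N₀ s) + 1)) / b i 1 with hX
    set Y := ∑ j ∈ Finset.range Q, c j (r (N₀ s)) / c j 1 with hY
    have hXn : 0 ≤ X := Finset.sum_nonneg hX0
    have hYn : 0 ≤ Y := Finset.sum_nonneg hY0
    have h8 : (0 : ℝ) < 8 ^ s := by positivity
    -- a constant this large excludes all `i < Q` and all `j < Q`
    have hCpos : (0 : ℝ) < 8 ^ s + X + Y := by positivity
    have hk1 : 1 ≤ κ s := by simp only [hκ]; omega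
    obtain ⟨i, j, u, -, hlt⟩ := hr (N₀ s) (κ s) hk1 _ hCpos
    obtain ⟨A, D, hV⟩ := exists_violation hb hc hk1 hCpos hlt
    refine ⟨(i, j), ?_, ?_, u, A, D, hV.A_pos, hV.D_pos, hV.u_le, hV.c_le, ?_⟩
    · by_contra hi
      have h1 := hV.lt_left hp hb hc (by simp only [hN₀, hL]; omega) (by simp only [hκ]; omega)
      have h2 := Finset.single_le_sum hX0 (Finset.mem_range.2 (not_le.1 hi))
      rw [← hX] at h2
      simp only at h2
      linarith
    · by_contra hj
      have h1 := hV.lt_right hp hb hc hN1 (by simp only [hN₀, hL]; omega)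
        (by simp only [hκ]; omega)
      have h2 := Finset.single_le_sum hY0 (Finset.mem_range.2 (not_le.1 hj))
      rw [← hY] at h2
      simp only at h2
      linarith
    · obtain ⟨x, hx, hbig⟩ := hV.big
      refine ⟨x, hx, lt_of_le_of_lt ?_ hbig⟩
      have := hV.A_pos
      have := hV.D_pos
      gcongr
      linarith
  choose q hq1 hq2 hqV using key
  set g : ℕ → ℕ × ℕ := fun s =>
    Nat.rec (q 0 0) (fun s prev => q (s + 1) (prev.1 + prev.2 + 1)) s with hg
  have hgs : ∀ s, g (s + 1) = q (s + 1) ((g s).1 + (g s).2 + 1) := fun s => rfl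
  have hgV : ∀ s, ∃ (u : E →ₗ[ℝ] ℝ) (A D : ℝ),
      Violation p b c N (N₀ s) (r (N₀ s)) (κ s) (8 ^ s) (g s).1 (g s).2 u A D := by
    intro s
    cases s with
    | zero => exact hqV 0 0
    | succ s => rw [hgs]; exact hqV _ _
  set i : ℕ → ℕ := fun s => (g s).1 with hi
  set j : ℕ → ℕ := fun s => (g s).2 with hj
  have hinj_i : Function.Injective i := by
    refine (strictMono_nat_of_lt_succ fun s => ?_).injective
    have := hq1 (s + 1) ((g s).1 + (g s).2 + 1)
    rw [← hgs] at this
    simp only [hi]; omega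
  have hinj_j : Function.Injective j := by
    refine (strictMono_nat_of_lt_succ fun s => ?_).injective
    have := hq2 (s + 1) ((g s).1 + (g s).2 + 1)
    rw [← hgs] at this
    simp only [hj]; omega
  choose u A D hV using hgV
  have hApos := fun s => (hV s).A_pos
  have hDpos := fun s => (hV s).D_pos
  set α : ℕ → ℝ := fun s => (1 / 2) ^ s / A s with hα
  set γ : ℕ → ℝ := fun s => (1 / 2) ^ s / D s with hγ
  have hαpos : ∀ s, 0 < α s := fun s => div_pos (by positivity) (hApos s)
  have hγpos : ∀ s, 0 < γ s := fun s => div_pos (by positivity) (hDpos s)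
  have hαA : ∀ s, α s * A s = (1 / 2) ^ s := fun s => div_mul_cancel₀ _ (hApos s).ne'
  have hγD : ∀ s, γ s * D s = (1 / 2) ^ s := fun s => div_mul_cancel₀ _ (hDpos s).ne'
  set S : E →ₗ[ℝ] (ℕ → ℝ) :=
    (Function.ExtendByZero.linearMap ℝ i).comp (LinearMap.pi fun s => α s • u s) with hS
  set R : (ℕ → ℝ) →ₗ[ℝ] (ℕ → ℝ) :=
    (Function.ExtendByZero.linearMap ℝ j).comp
      (LinearMap.pi fun s => γ s • LinearMap.proj (i s)) with hR
  have hSx : ∀ x, S x = Function.extend i (fun s => α s * u s x) 0 := fun x => rfl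
  have hRz : ∀ z, R z = Function.extend j (fun s => γ s * z (i s)) 0 := fun z => rfl
  have hSb : ∀ k, ∃ M : ℕ → ℝ, Summable M ∧ ∀ x s,
      |α s * u s x * b (i s) k| ≤ M s * p (N (k + 1)) x := by
    intro k
    refine ⟨_, summable_geom_add_finite (k + 1)
      (fun s => (1 / 2) ^ s * (b (i s) k / b (i s) 1)), fun x s => ?_⟩
    have hbk := hb.pos (i s) k
    have hb1 := hb.pos (i s) 1
    have hpx : 0 ≤ p (N (k + 1)) x := apply_nonneg _ _
    rw [abs_mul, abs_mul, abs_of_pos (hαpos s), abs_of_pos hbk]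
    by_cases hsk : s < k + 1
    · rw [if_pos hsk]
      have h1 := (hV s).u_le 1 le_rfl (by simp only [hκ]; omega) x
      have h2 : |u s x| * b (i s) 1 ≤ A s * p (N (k + 1)) x :=
        h1.trans (mul_le_mul_of_nonneg_left (hp x (hN (by omega))) (hApos s).le)
      calc α s * |u s x| * b (i s) k
          = α s * (b (i s) k / b (i s) 1) * (|u s x| * b (i s) 1) := by field_simp
        _ ≤ α s * (b (i s) k / b (i s) 1) * (A s * p (N (k + 1)) x) :=
            mul_le_mul_of_nonneg_left h2 (mul_nonneg (hαpos s).le (by positivity))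
        _ = (α s * A s) * (b (i s) k / b (i s) 1) * p (N (k + 1)) x := by ring
        _ ≤ _ := by
            rw [hαA]
            refine mul_le_mul_of_nonneg_right ?_ hpx
            have : (0 : ℝ) < (1 / 2) ^ s := by positivity
            linarith
    · rw [if_neg hsk, add_zero]
      have h1 := (hV s).u_le (k + 1) (by omega) (by simp only [hκ]; omega) x
      calc α s * |u s x| * b (i s) k ≤ α s * |u s x| * b (i s) (k + 1) :=
            mul_le_mul_of_nonneg_left (hb.mono _ (Nat.le_succ k))
              (mul_nonneg (hαpos s).le (abs_nonneg _))
        _ = α s * (|u s x| * b (i s) (k + 1)) := by ring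
        _ ≤ α s * (A s * p (N (k + 1)) x) := mul_le_mul_of_nonneg_left h1 (hαpos s).le
        _ = _ := by rw [← mul_assoc, hαA]
  have hRb : ∀ k, ∃ M : ℕ → ℝ, Summable M ∧ ∀ z, memLamL l b z → ∀ s,
      |γ s * z (i s) * c (j s) k| ≤ M s * lamLNorm l b (N (k + 1)) z := by
    intro k
    refine ⟨_, summable_geom_add_finite (k + 1)
      (fun s => γ s * (c (j s) k / b (i s) (N (k + 1)))), fun z hz s => ?_⟩
    have hck := hc.pos (j s) k
    have hbN := hb.pos (i s) (N (k + 1))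
    have hz1 := abs_coord_mul_le hb hz (i s) (N (k + 1))
    have hz0 : 0 ≤ lamLNorm l b (N (k + 1)) z := l.nrm_nonneg _ (hz _)
    have hγs := hγpos s
    rw [abs_mul, abs_mul, abs_of_pos hγs, abs_of_pos hck]
    have h0 : γ s * |z (i s)| * c (j s) k ≤
        γ s * (c (j s) k / b (i s) (N (k + 1))) * lamLNorm l b (N (k + 1)) z := by
      calc γ s * |z (i s)| * c (j s) k
          = γ s * (c (j s) k / b (i s) (N (k + 1))) * (|z (i s)| * b (i s) (N (k + 1))) := by
            field_simp
        _ ≤ _ := mul_le_mul_of_nonneg_left hz1 (by positivity)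
    refine h0.trans (mul_le_mul_of_nonneg_right ?_ hz0)
    by_cases hsk : s < k + 1
    · rw [if_pos hsk]
      have : (0 : ℝ) < (1 / 2) ^ s := by positivity
      linarith
    · rw [if_neg hsk, add_zero, ← hγD]
      refine mul_le_mul_of_nonneg_left ?_ hγs.le
      refine le_trans ?_ ((hV s).c_le (k + 1) (by omega) (by simp only [hκ]; omega))
      exact div_le_div_of_nonneg_right (hc.mono _ (Nat.le_succ k)) hbN.le
  choose MS hMS hSM using hSb
  choose MR hMR hRM using hRb
  have hSmem : ∀ x k, l.mem (fun n => S x n * b n k) ∧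
      lamLNorm l b k (S x) ≤ (∑' s, MS k s) * p (N (k + 1)) x := by
    intro x k
    rw [← tsum_mul_right]
    exact extend_mem_nrm l hinj_i (fun s => α s * u s x) (fun n => b n k)
      ((hMS k).mul_right _) (hSM k x)
  have hRmem : ∀ z, memLamL l b z → ∀ k, lt.mem (fun n => R z n * c n k) ∧
      lamLNorm lt c k (R z) ≤ (∑' s, MR k s) * lamLNorm l b (N (k + 1)) z := by
    intro z hz k
    rw [← tsum_mul_right]
    exact extend_mem_nrm lt hinj_j (fun s => γ s * z (i s)) (fun n => c n k)
      ((hMR k).mul_right _) (hRM k z hz)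
  have hle : ∀ a t : ℝ, 0 ≤ t → t ≤ 1 → a * t ≤ |a| := fun a t h0 h1 =>
    (mul_le_mul_of_nonneg_right (le_abs_self a) h0).trans
      (mul_le_of_le_one_right (abs_nonneg a) h1)
  obtain ⟨N', hN'⟩ := hBF S R (fun x k => (hSmem x k).1) (fun z hz k => (hRmem z hz k).1)
    (fun z w _ _ => map_add R z w) (fun t z _ => map_smul R t z)
    (fun k => ⟨N (k + 1), opSeminorm_lt_top |∑' s, MS k s| fun x _ hx =>
      (hSmem x k).2.trans (hle _ _ (apply_nonneg _ _) hx)⟩)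
    (fun k => ⟨N (k + 1), opSeminorm_lt_top |∑' s, MR k s| fun z hz hz1 =>
      (hRmem z hz k).2.trans (hle _ _ (l.nrm_nonneg _ (hz _)) hz1)⟩)
  obtain ⟨M, -, hM⟩ := exists_bound_of_opSeminorm (hN' (r (L + N')))
  obtain ⟨t, ht⟩ := pow_unbounded_of_one_lt M (one_lt_two (α := ℝ))
  -- a stage `s ≥ t` at which `N₀ s = L + N'`
  set s := Nat.pair N' t with hs
  have hNs : N₀ s = L + N' := by simp [hN₀, hs]
  obtain ⟨x, hx, hbig⟩ := (hV s).big
  rw [hNs] at hx hbig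
  have h1 := hM x trivial ((hp x (Nat.le_add_left N' L)).trans hx)
  have h2 := (abs_coord_mul_le hc (fun k => (hRmem _ (fun k => (hSmem x k).1) k).1)
    (j s) (r (L + N'))).trans h1
  have h3 : R (S x) (j s) = γ s * (α s * u s x) := by
    rw [hRz, hinj_j.extend_apply, hSx, hinj_i.extend_apply]
  rw [h3, abs_mul, abs_mul, abs_of_pos (hγpos s), abs_of_pos (hαpos s)] at h2
  have h4 : (2 : ℝ) ^ s < γ s * (α s * |u s x|) * c (j s) (r (L + N')) := by
    calc (2 : ℝ) ^ s = 8 ^ s * (α s * A s) * (γ s * D s) := by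
          rw [hαA, hγD, ← mul_pow, ← mul_pow]; norm_num
      _ = γ s * α s * (8 ^ s * A s * D s) := by ring
      _ < γ s * α s * (c (j s) (r (L + N')) * |u s x|) :=
          mul_lt_mul_of_pos_left hbig (mul_pos (hγpos s) (hαpos s))
      _ = _ := by ring
  have h5 : (2 : ℝ) ^ t ≤ 2 ^ s := pow_le_pow_right₀ one_le_two (Nat.right_le_pair N' t)
  linarith

/-- The right-hand side of the inequality decreases when `N` grows, so `N` may be replaced by
a larger monotone sequence. -/
theorem ineq_mono {E : Type*} [AddCommGroup E] [Module ℝ E]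
    {p : ℕ → Seminorm ℝ E} (hp : ∀ x, Monotone fun k => p k x)
    {b c : ℕ → ℕ → ℝ} (hb : IsKotheMatrix b) (hc : IsKotheMatrix c)
    {N N' : ℕ → ℕ} (hN : ∀ k, N k ≤ N' k) (k₀ i j : ℕ) (C₀ : ℝ) (u : E →ₗ[ℝ] ℝ) :
    ENNReal.ofReal C₀ *
        ((Finset.Icc 1 k₀).sup fun k => dualNorm p (N' k) u * ENNReal.ofReal (b i k)) *
        ((Finset.Icc 1 k₀).sup fun k => ENNReal.ofReal (c j k / b i (N' k))) ≤
      ENNReal.ofReal C₀ *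
        ((Finset.Icc 1 k₀).sup fun k => dualNorm p (N k) u * ENNReal.ofReal (b i k)) *
        ((Finset.Icc 1 k₀).sup fun k => ENNReal.ofReal (c j k / b i (N k))) := by
  refine mul_le_mul' (mul_le_mul' le_rfl ?_) ?_
  · exact Finset.sup_mono_fun fun k _ =>
      mul_le_mul' (dualNorm_antitone p hp u (hN k)) le_rfl
  · exact Finset.sup_mono_fun fun k _ => ENNReal.ofReal_le_ofReal
      (div_le_div_of_nonneg_left (hc.pos _ _).le (hb.pos _ _) (hb.mono i (hN k)))

/-- Theorem 4. Let `E` be a Fréchet space with increasing generating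
seminorms `(p k)`, `B`, `C` Köthe matrices, `ℓ`, `ℓ̃` Banach sequence spaces with monotone
norm, and assume `B` satisfies the Grothendieck–Pietsch condition (so `λ^ℓ(B)` is nuclear).
Then `(E, λ^ℓ(B), λ^ℓ̃(C)) ∈ 𝓑𝓕` iff for every sequence `N(k)` there is `N₀` such that for
each `r` there are `k₀` and `C₀ > 0` with
`c_j^r ‖u‖*_{N₀} ≤ C₀ · (max_{1≤k≤k₀} ‖u‖*_{N(k)} b_i^k) · (max_{1≤k≤k₀} c_j^k / b_i^{N(k)})`
for all `i`, `j` and all `u ∈ E′`. -/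
theorem BF_frechet_lambdaL_iff
    {E : Type*} [AddCommGroup E] [Module ℝ E]
    (p : ℕ → Seminorm ℝ E)
    (hpmono : ∀ k x, p k x ≤ p (k + 1) x)
    (hHaus : ∀ x : E, (∀ k, p k x = 0) → x = 0)
    (hComplete : ∀ u : ℕ → E,
      (∀ k, ∀ ε : ℝ, 0 < ε → ∃ M, ∀ i j, M ≤ i → M ≤ j → p k (u i - u j) < ε) →
      ∃ x : E, ∀ k, ∀ ε : ℝ, 0 < ε → ∃ M, ∀ i, M ≤ i → p k (u i - x) < ε)
    (b c : ℕ → ℕ → ℝ) (hb : IsKotheMatrix b) (hc : IsKotheMatrix c)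
    (l lt : MonoBanachSeqSpace)
    (hGP : ∀ k, ∃ m, Summable fun n => b n k / b n m) :
    (∀ (S : E →ₗ[ℝ] (ℕ → ℝ)) (R : (ℕ → ℝ) → (ℕ → ℝ)),
        (∀ x, memLamL l b (S x)) →
        (∀ z, memLamL l b z → memLamL lt c (R z)) →
        (∀ z w, memLamL l b z → memLamL l b w → R (z + w) = R z + R w) →
        (∀ (t : ℝ) (z), memLamL l b z → R (t • z) = t • R z) →
        (∀ k, ∃ m, opSeminorm (fun _ : E => True) (fun x => p m x) (lamLNorm l b k) S < ⊤) →
        (∀ k, ∃ m, opSeminorm (memLamL l b) (lamLNorm l b m) (lamLNorm lt c k) R < ⊤) →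
        ∃ N, ∀ r, opSeminorm (fun _ : E => True) (fun x => p N x) (lamLNorm lt c r)
          (fun x => R (S x)) < ⊤) ↔
      (∀ N : ℕ → ℕ, ∃ N₀ : ℕ, ∀ r : ℕ, ∃ k₀ : ℕ, 1 ≤ k₀ ∧ ∃ C₀ : ℝ, 0 < C₀ ∧
        ∀ (i j : ℕ) (u : E →ₗ[ℝ] ℝ), (∃ k, ∃ C' : ℝ, ∀ x, |u x| ≤ C' * p k x) →
          ENNReal.ofReal (c j r) * dualNorm p N₀ u ≤
            ENNReal.ofReal C₀ *
              ((Finset.Icc 1 k₀).sup fun k => dualNorm p (N k) u * ENNReal.ofReal (b i k)) *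
              ((Finset.Icc 1 k₀).sup fun k => ENNReal.ofReal (c j k / b i (N k)))) := by
  have hp : ∀ x, Monotone fun k => p k x := fun x => monotone_nat_of_le_succ fun k => hpmono k x
  constructor
  · intro hBF N
    set N' : ℕ → ℕ := fun k => k + ∑ m ∈ Finset.range (k + 1), N m with hN'
    have hmono : Monotone N' := fun k m hkm => add_le_add hkm
      (Finset.sum_le_sum_of_subset (Finset.range_mono (by omega)))
    have hle : ∀ k, N k ≤ N' k := fun k => (Finset.single_le_sum (f := N)
      (fun _ _ => Nat.zero_le _) (Finset.self_mem_range_succ k)).trans (Nat.le_add_left _ _)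
    obtain ⟨N₀, h⟩ := ineq_of_bounded_of_monotone p hp b c hb hc l lt hBF N' hmono
      (Nat.le_add_right 1 _)
    refine ⟨N₀, fun r => ?_⟩
    obtain ⟨k₀, hk₀, C₀, hC₀, hineq⟩ := h r
    exact ⟨k₀, hk₀, C₀, hC₀, fun i j u hu =>
      (hineq i j u hu).trans (ineq_mono hp hb hc hle k₀ i j C₀ u)⟩
  · intro H S R hS hR hRadd hRsmul hScont hRcont
    exact bounded_of_ineq p hp b c hb hc l lt hGP H S R hS hR hRadd hRsmul hScont hRcont
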